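/- Let 𝔤 be a Lie algebra over a field K and let 𝔦₀, 𝔦₁, 𝔦₂ be subspaces of 𝔤 that are each invariant under every Lie algebra automorphism of 𝔤. Then the set 𝔰 = {z ∈ 𝔦₀ : [z, w] ∈ 𝔦₂ for all w ∈ 𝔦₁} is also a subspace of 𝔤 invariant under every Lie algebra automorphism of 𝔤. -/

import Mathlib

section LieTransporter

variable {R L M : Type*} [CommRing R] [LieRing L] [LieAlgebra R L]
  [AddCommGroup M] [Module R M] [LieRingModule L M] [LieModule R L M]

/-- The transporter of a subset `S` of a Lie module into a submodule `P`: the elements of the Lie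
algebra whose action carries `S` into `P`. For submodules of the Lie algebra itself, the centralizer
of `i₁` in `i₀` modulo `i₂` is `i₀ ⊓ lieTransporter i₁ i₂`. -/
def lieTransporter (S : Set M) (P : Submodule R M) : Submodule R L :=
  ⨅ m ∈ S, P.comap ((LieModule.toEnd R L M : L →ₗ[R] Module.End R M).flip m)

theorem mem_lieTransporter {S : Set M} {P : Submodule R M} {x : L} :
    x ∈ lieTransporter S P ↔ ∀ m ∈ S, ⁅x, m⁆ ∈ P := by
  simp [lieTransporter]

theorem mapsTo_lieTransporter {R' L' M' : Type*} [CommRing R'] [LieRing L'] [LieAlgebra R' L']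
    [AddCommGroup M'] [Module R' M'] [LieRingModule L' M'] [LieModule R' L' M']
    {f : L → L'} {g : M ≃ M'} (hfg : ∀ x m, g ⁅x, m⁆ = ⁅f x, g m⁆)
    {S : Set M} {S' : Set M'} {P : Submodule R M} {P' : Submodule R' M'}
    (hS : Set.MapsTo g.symm S' S) (hP : Set.MapsTo g P P') :
    Set.MapsTo f (lieTransporter S P : Submodule R L) (lieTransporter S' P' : Submodule R' L') := by
  intro x hx
  refine mem_lieTransporter.mpr fun m hm ↦ ?_
  have bracket_eq : ⁅f x, m⁆ = g ⁅x, g.symm m⁆ := by rw [hfg, g.apply_symm_apply]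
  rw [bracket_eq]
  exact hP (mem_lieTransporter.mp hx _ (hS hm))

end LieTransporter

section Megaideal

variable {R L : Type*} [CommRing R] [LieRing L] [LieAlgebra R L]

/-- A megaideal of a Lie algebra: a submodule stable under every Lie algebra automorphism. Being
closed under the bracket is not part of the definition. -/
def IsMegaideal (I : Submodule R L) : Prop :=
  ∀ e : L ≃ₗ⁅R⁆ L, ∀ x ∈ I, e x ∈ I

theorem IsMegaideal.inf {I J : Submodule R L} (hI : IsMegaideal I) (hJ : IsMegaideal J) :
    IsMegaideal (I ⊓ J) :=
  fun e x hx ↦ ⟨hI e x hx.1, hJ e x hx.2⟩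

theorem IsMegaideal.lieTransporter {I J : Submodule R L} (hI : IsMegaideal I)
    (hJ : IsMegaideal J) : IsMegaideal (lieTransporter (I : Set L) J : Submodule R L) :=
  fun e ↦ mapsTo_lieTransporter (g := e.toLinearEquiv.toEquiv) e.map_lie (hI e.symm) (hJ e)

theorem stmt0_general (i0 i1 i2 : Submodule R L)
    (h0 : IsMegaideal i0) (h1 : IsMegaideal i1) (h2 : IsMegaideal i2) :
    ∃ s : Submodule R L,
      (s : Set L) = {z : L | z ∈ i0 ∧ ∀ w ∈ i1, ⁅z, w⁆ ∈ i2} ∧ IsMegaideal s := by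
  refine ⟨i0 ⊓ lieTransporter (i1 : Set L) i2, ?_, h0.inf (h1.lieTransporter h2)⟩
  ext z
  exact and_congr_right fun _ ↦ mem_lieTransporter

end Megaideal

/-- Proposition 1: the "relative centralizer" of one megaideal in another modulo a
third is again a megaideal. -/
theorem stmt0 {K L : Type*} [Field K] [LieRing L] [LieAlgebra K L]
    (i0 i1 i2 : Submodule K L)
    (h0 : ∀ e : L ≃ₗ⁅K⁆ L, ∀ x ∈ i0, e x ∈ i0)
    (h1 : ∀ e : L ≃ₗ⁅K⁆ L, ∀ x ∈ i1, e x ∈ i1)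
    (h2 : ∀ e : L ≃ₗ⁅K⁆ L, ∀ x ∈ i2, e x ∈ i2) :
    ∃ s : Submodule K L,
      (s : Set L) = {z : L | z ∈ i0 ∧ ∀ w ∈ i1, ⁅z, w⁆ ∈ i2} ∧
      ∀ e : L ≃ₗ⁅K⁆ L, ∀ x ∈ s, e x ∈ s :=
  stmt0_general i0 i1 i2 h0 h1 h2
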